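/- Let V be an H-module that is finite-dimensional over F and indecomposable. Then the endomorphism ring End_H(V) is a local ring: it is nontrivial, and for all a, b ∈ End_H(V) with a + b = id_V, either a is a unit or b is a unit. -/

import Mathlib

/-- An `H`-module `M` is indecomposable if it is nonzero and whenever `p` and `q` are
complementary submodules, one of them is trivial. -/
def IsIndecomposableModule (H : Type*) [Ring H] (M : Type*) [AddCommGroup M]
    [Module H M] : Prop :=
  (∃ x : M, x ≠ 0) ∧
    ∀ p q : Submodule H M, p ⊓ q = ⊥ → p ⊔ q = ⊤ → p = ⊥ ∨ q = ⊥

theorem isLocalRing_of_isUnit_or_isNilpotent {R : Type*} [Ring R] [Nontrivial R]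
    (h : ∀ r : R, IsUnit r ∨ IsNilpotent r) : IsLocalRing R :=
  .of_isUnit_or_isUnit_one_sub_self fun r => (h r).imp_right IsNilpotent.isUnit_one_sub

namespace IsIndecomposableModule

variable {H M : Type*} [Ring H] [AddCommGroup M] [Module H M]

theorem nontrivial (hM : IsIndecomposableModule H M) : Nontrivial M :=
  let ⟨x, hx⟩ := hM.1
  nontrivial_of_ne x 0 hx

theorem eq_bot_or_eq_bot_of_isCompl (hM : IsIndecomposableModule H M) {p q : Submodule H M}
    (hpq : IsCompl p q) : p = ⊥ ∨ q = ⊥ :=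
  hM.2 p q hpq.inf_eq_bot hpq.sup_eq_top

/-- The idea is Fitting's lemma: `M` is the direct sum of the kernel and the range of `f ^ n` for
all large `n`. -/
theorem isUnit_or_isNilpotent [IsArtinian H M] [IsNoetherian H M]
    (hM : IsIndecomposableModule H M) (f : Module.End H M) : IsUnit f ∨ IsNilpotent f := by
  obtain ⟨n, hcompl, hn⟩ :=
    (f.eventually_isCompl_ker_pow_range_pow.and (Filter.eventually_ne_atTop 0)).exists
  rcases hM.eq_bot_or_eq_bot_of_isCompl hcompl with hker | hrange
  · have hinj : Function.Injective (f ^ n) := LinearMap.ker_eq_bot.mp hker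
    have hunit : IsUnit (f ^ n) :=
      (Module.End.isUnit_iff _).mpr (IsArtinian.bijective_of_injective_endomorphism _ hinj)
    exact .inl ((isUnit_pow_iff hn).mp hunit)
  · exact .inr ⟨n, LinearMap.range_eq_bot.mp hrange⟩

end IsIndecomposableModule

theorem stmt13_general {H M : Type*} [Ring H] [AddCommGroup M] [Module H M] [IsArtinian H M]
    [IsNoetherian H M] (hM : IsIndecomposableModule H M) : IsLocalRing (Module.End H M) :=
  have := hM.nontrivial
  isLocalRing_of_isUnit_or_isNilpotent hM.isUnit_or_isNilpotent

theorem stmt13 (F : Type*) [Field F] (H : Type*) [Ring H] [Algebra F H]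
    (V : Type*)
    [AddCommGroup V] [Module H V] [Module F V] [IsScalarTower F H V] [FiniteDimensional F V]
    (hV : IsIndecomposableModule H V) :
    Nontrivial (Module.End H V) ∧
      ∀ a b : Module.End H V, a + b = 1 → IsUnit a ∨ IsUnit b := by
  have : IsArtinian H V := isArtinian_of_tower F inferInstance
  have : IsNoetherian H V := isNoetherian_of_tower F inferInstance
  have hlocal := stmt13_general hV
  exact ⟨hlocal.toNontrivial, fun _ _ => hlocal.isUnit_or_isUnit_of_add_one⟩
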